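/- Let d = 2κ+1 be odd and let γ_d¹, …, γ_d^{d+1} be the Dirac matrices of size 2^{κ+1} given by the recursive construction, with chiral matrix γ₀ = γ_d^{d+2} = σ₃ ⊗ I_{2^κ}. Let h : ℝ^d → ℝ^{d+1} be nonvanishing and differentiable at a point k, let H(k') = Σ_{j=1}^{d+1} h_j(k') γ_d^j and F(k') = H(k')/|h(k')|. Let L(k) be the (d+1)×(d+1) real matrix whose first row is h(k) and whose (j+1)-th row is the partial derivative ∂h/∂k_j(k), 1 ≤ j ≤ d. Then Σ_{ρ ∈ S_d} sgn(ρ) · trace( γ₀ · F(k) · ∂_{ρ(1)}F(k) · ⋯ · ∂_{ρ(d)}F(k) ) = (2i)^{(d+1)/2} · d! · det(L(k)) / |h(k)|^{d+1}. -/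

import Mathlib

open Matrix

/-- Pauli matrix σ₁. -/
noncomputable def pauli1 : Matrix (Fin 2) (Fin 2) ℂ := !![0, 1; 1, 0]

/-- Pauli matrix σ₂. -/
noncomputable def pauli2 : Matrix (Fin 2) (Fin 2) ℂ := !![0, -Complex.I; Complex.I, 0]

/-- Pauli matrix σ₃. -/
noncomputable def pauli3 : Matrix (Fin 2) (Fin 2) ℂ := !![1, 0; 0, -1]

/-- Re-index a square matrix along an equality of dimensions. -/
noncomputable def castSq {m n : ℕ} (h : m = n) (A : Matrix (Fin m) (Fin m) ℂ) :
    Matrix (Fin n) (Fin n) ℂ :=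
  Matrix.reindex (finCongr h) (finCongr h) A

/-- Kronecker product of a 2×2 matrix with an n×n matrix, with indices flattened. -/
noncomputable def kron2 {n : ℕ} (A : Matrix (Fin 2) (Fin 2) ℂ) (B : Matrix (Fin n) (Fin n) ℂ) :
    Matrix (Fin (2 * n)) (Fin (2 * n)) ℂ :=
  Matrix.reindex finProdFinEquiv finProdFinEquiv (Matrix.kroneckerMap (· * ·) A B)

/-- The recursively constructed Dirac matrices: `diracGamma κ j` is the `j`-th Dirac matrix
(1-indexed, `1 ≤ j ≤ 2κ+1`) of size `2^κ`. For κ = 1 these are the Pauli matrices; the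
recursion is `γ_{d+2}^j = σ₁ ⊗ γ_d^j` (`1 ≤ j ≤ d+1`), `γ_{d+2}^{d+2} = σ₂ ⊗ I`,
`γ_{d+2}^{d+3} = σ₃ ⊗ I` for `d = 2κ`. -/
noncomputable def diracGamma : (κ : ℕ) → ℕ → Matrix (Fin (2 ^ κ)) (Fin (2 ^ κ)) ℂ
  | 0, _ => 1
  | 1, j => castSq (by norm_num)
      (if j = 1 then pauli1 else if j = 2 then pauli2 else if j = 3 then pauli3 else 1)
  | (κ + 2), j => castSq (by rw [pow_succ]; ring)
      (if j ≤ 2 * (κ + 1) + 1 then kron2 pauli1 (diracGamma (κ + 1) j)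
       else if j = 2 * (κ + 1) + 2 then kron2 pauli2 1
       else if j = 2 * (κ + 1) + 3 then kron2 pauli3 1
       else 1)

attribute [local instance] Matrix.normedAddCommGroup Matrix.normedSpace

section helpers

theorem aux_prod_swap {A : Type*} [Ring A] : ∀ (n : ℕ) (b : Fin (n + 1) → A)
    (_ : ∀ i j, i ≠ j → b i * b j = -(b j * b i)) (i : Fin n),
    (List.ofFn (fun l => b (Equiv.swap i.castSucc i.succ l))).prod = -(List.ofFn b).prod := by
  intro n
  induction n with
  | zero => intro b _ i; exact i.elim0
  | succ n ih =>
    intro b hb i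
    refine Fin.cases ?_ (fun i => ?_) i
    · have h1 : ∀ l : Fin n, Equiv.swap (0 : Fin (n+2)) 1 l.succ.succ = l.succ.succ := by
        intro l
        apply Equiv.swap_apply_of_ne_of_ne
        · exact Fin.succ_ne_zero _
        · intro h
          exact Fin.succ_ne_zero l (Fin.succ_injective _ h)
      simp only [List.ofFn_succ, List.prod_cons, Fin.castSucc_zero, Fin.succ_zero_eq_one, h1,
        Equiv.swap_apply_left, Equiv.swap_apply_right]
      rw [← mul_assoc, hb 1 0 (by simp), ← mul_assoc, neg_mul]
    · have h0 : Equiv.swap i.succ.castSucc i.succ.succ (0 : Fin (n+2)) = 0 := by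
        apply Equiv.swap_apply_of_ne_of_ne
        · intro h
          rw [← Fin.succ_castSucc] at h
          exact Fin.succ_ne_zero _ h.symm
        · exact (Fin.succ_ne_zero _).symm
      have h1 : ∀ l : Fin (n+1), Equiv.swap i.succ.castSucc i.succ.succ l.succ
          = (Equiv.swap i.castSucc i.succ l).succ := by
        intro l
        rw [← Fin.succ_castSucc, Equiv.swap_apply_def, Equiv.swap_apply_def]
        simp only [Fin.succ_inj]
        split_ifs <;> rfl
      rw [List.ofFn_succ, List.ofFn_succ (f := b)]
      simp only [List.prod_cons, h0, h1]
      rw [ih (fun l => b l.succ) (fun i j hij => hb _ _ (fun h => hij (Fin.succ_injective _ h))) i]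
      rw [mul_neg]

theorem aux_prod_perm {A : Type*} [Ring A] (n : ℕ) (b : Fin n → A)
    (hb : ∀ i j, i ≠ j → b i * b j = -(b j * b i)) (σ : Equiv.Perm (Fin n)) :
    (List.ofFn (fun l => b (σ l))).prod = ((Equiv.Perm.sign σ : ℤˣ) : ℤ) • (List.ofFn b).prod := by
  cases n with
  | zero => simp [Subsingleton.elim σ 1]
  | succ n =>
    have hσ : σ ∈ Submonoid.closure
      (Set.range fun i : Fin n => Equiv.swap i.castSucc i.succ) := by
      rw [Equiv.Perm.mclosure_swap_castSucc_succ]; trivial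
    induction hσ using Submonoid.closure_induction_right with
    | one => simp
    | mul_right τ _ s hs ih =>
      obtain ⟨i, rfl⟩ := hs
      have := aux_prod_swap n (fun l => b (τ l))
        (fun i j hij => hb _ _ (fun h => hij (τ.injective h))) i
      simp only [Equiv.Perm.mul_apply] at this ⊢
      rw [this, ih]
      have hne : i.castSucc ≠ i.succ := (Fin.castSucc_lt_succ).ne
      rw [Equiv.Perm.sign_mul, Equiv.Perm.sign_swap hne]
      simp

theorem aux_anti_list {A : Type*} [Ring A] (g : A) : ∀ (l : List A)
    (_ : ∀ x ∈ l, g * x = -(x * g)), g * l.prod = (-1) ^ l.length * (l.prod * g) := by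
  intro l
  induction l with
  | nil => simp
  | cons a l ih =>
    intro h
    have h1 := ih (fun x hx => h x (List.mem_cons_of_mem _ hx))
    have h2 := h a List.mem_cons_self
    have h3 : Commute ((-1 : A) ^ l.length) a := (Commute.neg_one_left a).pow_left _
    rw [List.prod_cons, List.length_cons, ← mul_assoc, h2, neg_mul, mul_assoc, h1, pow_succ,
      ← mul_assoc a, ← h3.eq]
    simp [mul_assoc]

theorem kron2_mul {n : ℕ} (A C : Matrix (Fin 2) (Fin 2) ℂ) (B D : Matrix (Fin n) (Fin n) ℂ) :
    kron2 A B * kron2 C D = kron2 (A * C) (B * D) := by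
  unfold kron2
  rw [Matrix.mul_kronecker_mul A C B D]
  simp [Matrix.reindex_apply, Matrix.submatrix_mul_equiv]

theorem kron2_one {n : ℕ} : kron2 1 (1 : Matrix (Fin n) (Fin n) ℂ) = 1 := by
  unfold kron2
  rw [Matrix.one_kronecker_one]
  simp

theorem kron2_neg_left {n : ℕ} (A : Matrix (Fin 2) (Fin 2) ℂ) (B : Matrix (Fin n) (Fin n) ℂ) :
    kron2 (-A) B = - kron2 A B := by
  ext i j; simp [kron2]

theorem kron2_neg_right {n : ℕ} (A : Matrix (Fin 2) (Fin 2) ℂ) (B : Matrix (Fin n) (Fin n) ℂ) :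
    kron2 A (-B) = - kron2 A B := by
  ext i j; simp [kron2]

theorem kron2_smul_left {n : ℕ} (c : ℂ) (A : Matrix (Fin 2) (Fin 2) ℂ)
    (B : Matrix (Fin n) (Fin n) ℂ) : kron2 (c • A) B = c • kron2 A B := by
  ext i j; simp [kron2, mul_assoc]

theorem kron2_smul_right {n : ℕ} (c : ℂ) (A : Matrix (Fin 2) (Fin 2) ℂ)
    (B : Matrix (Fin n) (Fin n) ℂ) : kron2 A (c • B) = c • kron2 A B := by
  ext i j; simp [kron2, mul_left_comm]

theorem castSq_mul {m n : ℕ} (h : m = n) (A B : Matrix (Fin m) (Fin m) ℂ) :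
    castSq h A * castSq h B = castSq h (A * B) := by
  subst h; rfl

theorem castSq_one {m n : ℕ} (h : m = n) : castSq h 1 = 1 := by
  subst h; simp [castSq]

theorem castSq_neg {m n : ℕ} (h : m = n) (A : Matrix (Fin m) (Fin m) ℂ) :
    castSq h (-A) = - castSq h A := by
  subst h; rfl

theorem castSq_smul {m n : ℕ} (h : m = n) (c : ℂ) (A : Matrix (Fin m) (Fin m) ℂ) :
    castSq h (c • A) = c • castSq h A := by
  subst h; rfl

theorem pauli_sq1 : pauli1 * pauli1 = 1 := by
  ext i j; fin_cases i <;> fin_cases j <;> simp [pauli1]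
theorem pauli_sq2 : pauli2 * pauli2 = 1 := by
  ext i j; fin_cases i <;> fin_cases j <;> simp [pauli2]
theorem pauli_sq3 : pauli3 * pauli3 = 1 := by
  ext i j; fin_cases i <;> fin_cases j <;> simp [pauli3]
theorem pauli_21 : pauli2 * pauli1 = -(pauli1 * pauli2) := by
  ext i j; fin_cases i <;> fin_cases j <;> simp [pauli1, pauli2]
theorem pauli_31 : pauli3 * pauli1 = -(pauli1 * pauli3) := by
  ext i j; fin_cases i <;> fin_cases j <;> simp [pauli1, pauli3]
theorem pauli_32 : pauli3 * pauli2 = -(pauli2 * pauli3) := by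
  ext i j; fin_cases i <;> fin_cases j <;> simp [pauli3, pauli2]
theorem pauli_123 : pauli1 * pauli2 * pauli3 = Complex.I • 1 := by
  ext i j; fin_cases i <;> fin_cases j <;> simp [pauli1, pauli3, pauli2]

theorem dg_low (n j : ℕ) (hj : j ≤ 2 * (n + 1) + 1) : diracGamma (n + 2) j =
    castSq (by rw [pow_succ]; ring) (kron2 pauli1 (diracGamma (n + 1) j)) := by
  rw [diracGamma, if_pos hj]

theorem dg_2 (n j : ℕ) (hj : j = 2 * (n + 1) + 2) : diracGamma (n + 2) j =
    castSq (by rw [pow_succ]; ring) (kron2 pauli2 (1 : Matrix (Fin (2 ^ (n+1))) _ ℂ)) := by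
  rw [diracGamma, if_neg (by omega), if_pos hj]

theorem dg_3 (n j : ℕ) (hj : j = 2 * (n + 1) + 3) : diracGamma (n + 2) j =
    castSq (by rw [pow_succ]; ring) (kron2 pauli3 (1 : Matrix (Fin (2 ^ (n+1))) _ ℂ)) := by
  rw [diracGamma, if_neg (by omega), if_neg (by omega), if_pos hj]

theorem dg_sq (n j : ℕ) (h1 : 1 ≤ j) (h2 : j ≤ 2 * (n + 1) + 1) :
    diracGamma (n + 1) j * diracGamma (n + 1) j = 1 := by
  induction n with
  | zero =>
    have : j = 1 ∨ j = 2 ∨ j = 3 := by omega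
    rcases this with rfl | rfl | rfl <;>
      simp [diracGamma, castSq_mul, pauli_sq1, pauli_sq2, pauli_sq3, castSq_one]
  | succ n ih =>
    have : j ≤ 2 * (n + 1) + 1 ∨ j = 2 * (n + 1) + 2 ∨ j = 2 * (n + 1) + 3 := by omega
    rcases this with h | h | h
    · rw [dg_low n j h, castSq_mul, kron2_mul, ih h, pauli_sq1, kron2_one, castSq_one]
    · rw [dg_2 n j h, castSq_mul, kron2_mul, pauli_sq2, one_mul, kron2_one, castSq_one]
    · rw [dg_3 n j h, castSq_mul, kron2_mul, pauli_sq3, one_mul, kron2_one, castSq_one]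

theorem dg_anti_lt (n i j : ℕ) (h1 : 1 ≤ i) (hij : i < j) (h2 : j ≤ 2 * (n + 1) + 1) :
    diracGamma (n + 1) j * diracGamma (n + 1) i =
      -(diracGamma (n + 1) i * diracGamma (n + 1) j) := by
  induction n with
  | zero =>
    have : (i = 1 ∧ j = 2) ∨ (i = 1 ∧ j = 3) ∨ (i = 2 ∧ j = 3) := by omega
    rcases this with ⟨rfl, rfl⟩ | ⟨rfl, rfl⟩ | ⟨rfl, rfl⟩ <;>
      simp [diracGamma, castSq_mul, pauli_21, pauli_31, pauli_32, castSq_neg]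
  | succ n ih =>
    have : j ≤ 2 * (n + 1) + 1 ∨ j = 2 * (n + 1) + 2 ∨ j = 2 * (n + 1) + 3 := by omega
    rcases this with h | h | h
    · rw [dg_low n j h, dg_low n i (by omega)]
      simp only [castSq_mul, kron2_mul]
      rw [ih h, kron2_neg_right, castSq_neg]
    · rw [dg_2 n j h, dg_low n i (by omega)]
      simp only [castSq_mul, kron2_mul]
      rw [pauli_21, kron2_neg_left, castSq_neg, one_mul, mul_one]
    · rw [dg_3 n j h]
      by_cases hi : i = 2 * (n + 1) + 2
      · rw [dg_2 n i hi]
        simp only [castSq_mul, kron2_mul]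
        rw [pauli_32, kron2_neg_left, castSq_neg]
      · rw [dg_low n i (by omega)]
        simp only [castSq_mul, kron2_mul]
        rw [pauli_31, kron2_neg_left, castSq_neg, one_mul, mul_one]

theorem dg_anti (n i j : ℕ) (hi : 1 ≤ i) (hj : 1 ≤ j) (hij : i ≠ j) (hi2 : i ≤ 2 * (n + 1) + 1)
    (hj2 : j ≤ 2 * (n + 1) + 1) :
    diracGamma (n + 1) i * diracGamma (n + 1) j =
      -(diracGamma (n + 1) j * diracGamma (n + 1) i) := by
  rcases lt_or_gt_of_ne hij with h | h
  · rw [dg_anti_lt n i j hi h hj2, neg_neg]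
  · rw [dg_anti_lt n j i hj h hi2]

theorem aux_kron_prod {m n : ℕ} (h : 2 * m = n) : ∀ (l : ℕ) (b : Fin l → Matrix (Fin m) (Fin m) ℂ),
    (List.ofFn (fun i => castSq h (kron2 pauli1 (b i)))).prod =
      castSq h (kron2 (pauli1 ^ l) (List.ofFn b).prod) := by
  intro l
  induction l with
  | zero => intro b; simp [kron2_one, castSq_one]
  | succ l ih =>
    intro b
    simp only [List.ofFn_succ, List.prod_cons]
    rw [ih (fun i => b i.succ), castSq_mul, kron2_mul, pow_succ']

theorem dg_prod (n : ℕ) : (List.ofFn (fun i : Fin (2 * (n + 1) + 1) =>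
    diracGamma (n + 1) ((i : ℕ) + 1))).prod = Complex.I ^ (n + 1) • 1 := by
  induction n with
  | zero =>
    have : (List.ofFn (fun i : Fin 3 =>
      diracGamma 1 ((i : ℕ) + 1))).prod = Complex.I ^ 1 • 1 := by
      simp only [List.ofFn_succ, List.ofFn_zero, List.prod_cons, List.prod_nil, mul_one]
      simp [diracGamma, castSq_mul]
      rw [← mul_assoc, pauli_123, castSq_smul, castSq_one]
    exact this
  | succ n ih =>
    have : (List.ofFn (fun i : Fin (2 * (n + 1) + 1 + 1 + 1) =>
      diracGamma (n + 2) ((i : ℕ) + 1))).prod = Complex.I ^ (n + 2) • 1 := by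
      rw [List.ofFn_succ', List.ofFn_succ']
      simp only [List.concat_eq_append, List.prod_append, List.prod_cons, List.prod_nil, mul_one,
        Fin.val_castSucc, Fin.val_last]
      rw [dg_2 n _ rfl, dg_3 n _ rfl]
      have : (fun i : Fin (2 * (n + 1) + 1) => diracGamma (n + 2) ((i : ℕ) + 1)) =
          fun i : Fin (2 * (n + 1) + 1) => castSq (by rw [pow_succ]; ring)
            (kron2 pauli1 (diracGamma (n + 1) ((i : ℕ) + 1))) := by
        funext i
        exact dg_low n _ (by omega)
      have hp : pauli1 ^ (2 * (n + 1) + 1) = pauli1 := by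
        rw [pow_succ, pow_mul, pow_two, pauli_sq1, one_pow, one_mul]
      rw [this, aux_kron_prod, ih, castSq_mul, castSq_mul, kron2_mul, kron2_mul, hp, pauli_123, kron2_smul_left, mul_one,
        mul_one, kron2_smul_right, kron2_one, castSq_smul, castSq_smul, castSq_one, smul_smul,
        ← pow_succ']
    exact this

theorem tr_perm (κ : ℕ) (σ : Equiv.Perm (Fin (2 * κ + 1 + 1))) :
    Matrix.trace (diracGamma (κ + 1) (2 * κ + 1 + 2) * (List.ofFn (fun l =>
      diracGamma (κ + 1) ((σ l : ℕ) + 1))).prod) =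
      ((Equiv.Perm.sign σ : ℤ) : ℂ) * (2 * Complex.I) ^ (κ + 1) := by
  have h1 := aux_prod_perm (2 * κ + 1 + 1) (fun l : Fin (2 * κ + 1 + 1) =>
    diracGamma (κ + 1) ((l : ℕ) + 1)) (fun i j hij => dg_anti κ _ _ (by omega) (by omega)
      (fun h => hij (Fin.ext (by omega))) (by omega) (by omega)) σ
  have h2 : (List.ofFn (fun i : Fin (2 * κ + 1 + 1 + 1) =>
    diracGamma (κ + 1) ((i : ℕ) + 1))).prod = Complex.I ^ (κ + 1) • 1 := dg_prod κ
  rw [List.ofFn_succ'] at h2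
  simp only [List.concat_eq_append, List.prod_append, List.prod_cons, List.prod_nil, mul_one,
        Fin.val_castSucc, Fin.val_last] at h2
  rw [h1, Matrix.trace_mul_comm, smul_mul_assoc, Matrix.trace_smul, h2, Matrix.trace_smul,
    Matrix.trace_one]
  simp [mul_pow, mul_comm]

theorem tr_nonsurj (κ : ℕ) (u : Fin (2 * κ + 1 + 1) → Fin (2 * κ + 1 + 1))
    (m : Fin (2 * κ + 1 + 1)) (hm : ∀ l, u l ≠ m) :
    Matrix.trace (diracGamma (κ + 1) (2 * κ + 1 + 2) * (List.ofFn (fun l =>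
      diracGamma (κ + 1) ((u l : ℕ) + 1))).prod) = 0 := by
  have h1 := aux_anti_list (diracGamma (κ + 1) ((m : ℕ) + 1))
    (diracGamma (κ + 1) (2 * κ + 1 + 2) :: List.ofFn (fun l =>
      diracGamma (κ + 1) ((u l : ℕ) + 1))) (by
    intro x hx
    rcases List.mem_cons.1 hx with rfl | hx
    · exact dg_anti κ _ _ (by omega) (by omega) (by omega) (by omega) (by omega)
    · obtain ⟨l, rfl⟩ := (List.mem_ofFn' _ _).1 hx
      exact dg_anti κ _ _ (by omega) (by omega)
        (fun h => hm l (Fin.ext (by omega))) (by omega) (by omega))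
  rw [List.prod_cons, List.length_cons, List.length_ofFn,
    Odd.neg_one_pow ⟨κ + 1, by ring⟩] at h1
  have hs := dg_sq κ ((m : ℕ) + 1) (by omega) (by omega)
  generalize diracGamma (κ + 1) (2 * κ + 1 + 2) * (List.ofFn (fun l =>
      diracGamma (κ + 1) ((u l : ℕ) + 1))).prod = X at *
  generalize diracGamma (κ + 1) ((m : ℕ) + 1) = g at *
  have h2 : X = -(g * X * g) := by
    rw [h1]; simp [mul_assoc, hs]
  have h3 : Matrix.trace (g * X * g) = Matrix.trace X := by
    rw [Matrix.trace_mul_comm, ← mul_assoc, hs, one_mul]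
  have h4 := congrArg Matrix.trace h2
  rw [Matrix.trace_neg, h3] at h4
  exact self_eq_neg.1 h4

theorem tr_det (κ : ℕ) (u : Fin (2 * κ + 1 + 1) → Fin (2 * κ + 1 + 1)) :
    Matrix.trace (diracGamma (κ + 1) (2 * κ + 1 + 2) * (List.ofFn (fun l =>
      diracGamma (κ + 1) ((u l : ℕ) + 1))).prod) =
      (2 * Complex.I) ^ (κ + 1) *
        Matrix.det (Matrix.of fun i => (Pi.single (u i) 1 : Fin (2 * κ + 1 + 1) → ℂ)) := by
  by_cases hu : Function.Injective u
  · obtain ⟨σ, rfl⟩ : ∃ σ : Equiv.Perm (Fin (2 * κ + 1 + 1)), u = σ :=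
      ⟨Equiv.ofBijective u (Finite.injective_iff_bijective.1 hu), rfl⟩
    rw [tr_perm]
    have : (Matrix.of fun i => (Pi.single (σ i) 1 : Fin (2 * κ + 1 + 1) → ℂ)) =
        σ.permMatrix ℂ := by
      ext i j
      simp [Equiv.Perm.permMatrix, PEquiv.toMatrix_apply, Pi.single_apply, eq_comm]
    rw [this, Matrix.det_permutation, mul_comm]
  · have hs : ¬ Function.Surjective u := fun h => hu (Finite.injective_iff_surjective.2 h)
    simp only [Function.Surjective, not_forall, not_exists] at hs
    obtain ⟨m, hm⟩ := hs
    rw [tr_nonsurj κ u m hm]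
    simp only [Function.Injective, not_forall] at hu
    obtain ⟨i, j, hij, hne⟩ := hu
    rw [Matrix.det_zero_of_row_eq hne, mul_zero]
    change (Pi.single (u i) 1 : Fin (2 * κ + 1 + 1) → ℂ) = Pi.single (u j) 1
    rw [hij]

/-- Clifford map. -/
noncomputable def cliffMap (κ : ℕ) : (Fin (2 * κ + 1 + 1) → ℂ) →ₗ[ℂ]
    Matrix (Fin (2 ^ (κ + 1))) (Fin (2 ^ (κ + 1))) ℂ :=
  Fintype.linearCombination ℂ
    (fun j : Fin (2 * κ + 1 + 1) => diracGamma (κ + 1) ((j : ℕ) + 1))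

/-- Antisymmetrized trace form. -/
noncomputable def trAlt (κ : ℕ) (X : Matrix (Fin (2 ^ (κ + 1))) (Fin (2 ^ (κ + 1))) ℂ) :
    (Fin (2 * κ + 1 + 1) → ℂ) [⋀^Fin (2 * κ + 1)]→ₗ[ℂ] ℂ :=
  MultilinearMap.alternatization
    (((Matrix.traceLinearMap (Fin (2 ^ (κ + 1))) ℂ ℂ).comp
      (LinearMap.mulLeft ℂ X)).compMultilinearMap
      ((MultilinearMap.mkPiAlgebraFin ℂ (2 * κ + 1)
        (Matrix (Fin (2 ^ (κ + 1))) (Fin (2 ^ (κ + 1))) ℂ)).compLinearMap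
        (fun _ => cliffMap κ)))

theorem trAlt_apply (κ : ℕ) (X : Matrix (Fin (2 ^ (κ + 1))) (Fin (2 ^ (κ + 1))) ℂ)
    (w : Fin (2 * κ + 1) → (Fin (2 * κ + 1 + 1) → ℂ)) :
    trAlt κ X w = ∑ ρ : Equiv.Perm (Fin (2 * κ + 1)), ((Equiv.Perm.sign ρ : ℤ) : ℂ) *
      Matrix.trace (X * (List.ofFn fun i => cliffMap κ (w (ρ i))).prod) := by
  rw [trAlt, MultilinearMap.alternatization_apply]
  refine Finset.sum_congr rfl (fun ρ _ => ?_)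
  simp [MultilinearMap.domDomCongr_apply, Units.smul_def]

theorem cliffMap_single (κ : ℕ) (j : Fin (2 * κ + 1 + 1)) :
    cliffMap κ (Pi.single j 1) = diracGamma (κ + 1) ((j : ℕ) + 1) := by
  simp [cliffMap]

theorem trAlt_single (κ : ℕ) (j : Fin (2 * κ + 1 + 1)) :
    trAlt κ (diracGamma (κ + 1) (2 * κ + 1 + 2) * cliffMap κ (Pi.single j 1)) =
      ((2 * Complex.I) ^ (κ + 1) * (Nat.factorial (2 * κ + 1) : ℂ)) •
        (Matrix.detRowAlternating (n := Fin (2 * κ + 1 + 1)) (R := ℂ)).curryLeft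
          (Pi.single j 1) := by
  refine Module.Basis.ext_alternating (Pi.basisFun ℂ (Fin (2 * κ + 1 + 1))) (fun v hv => ?_)
  rw [trAlt_apply]
  simp only [Pi.basisFun_apply, cliffMap_single]
  have key : ∀ ρ : Equiv.Perm (Fin (2 * κ + 1)), ((Equiv.Perm.sign ρ : ℤ) : ℂ) *
      Matrix.trace (diracGamma (κ + 1) (2 * κ + 1 + 2) * diracGamma (κ + 1) ((j : ℕ) + 1) *
        (List.ofFn fun i => diracGamma (κ + 1) ((v (ρ i) : ℕ) + 1)).prod) =
      Matrix.trace (diracGamma (κ + 1) (2 * κ + 1 + 2) * diracGamma (κ + 1) ((j : ℕ) + 1) *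
        (List.ofFn fun i => diracGamma (κ + 1) ((v i : ℕ) + 1)).prod) := by
    intro ρ
    have h1 := aux_prod_perm (2 * κ + 1) (fun l : Fin (2 * κ + 1) =>
      diracGamma (κ + 1) ((v l : ℕ) + 1)) (fun i j hij => dg_anti κ _ _ (by omega) (by omega)
      (fun h => hij (hv (Fin.ext (by omega)))) (by omega) (by omega)) ρ
    rw [h1, mul_smul_comm, Matrix.trace_smul]
    rcases Int.units_eq_one_or (Equiv.Perm.sign ρ) with h | h <;> simp [h]
  rw [Finset.sum_congr rfl (fun ρ _ => key ρ), Finset.sum_const, Finset.card_univ,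
    Fintype.card_perm, Fintype.card_fin]
  have h2 := tr_det κ (Fin.cons j v)
  rw [List.ofFn_succ] at h2
  simp only [List.prod_cons, Fin.cons_zero, Fin.cons_succ] at h2
  rw [mul_assoc, h2, AlternatingMap.smul_apply, AlternatingMap.curryLeft_apply_apply]
  have h3 : (Matrix.of fun i => (Pi.single ((Fin.cons j v : Fin (2 * κ + 1 + 1) →
      Fin (2 * κ + 1 + 1)) i) 1 : Fin (2 * κ + 1 + 1) → ℂ)) =
      (Matrix.vecCons (Pi.single j 1) (fun i => Pi.single (v i) 1) :
        Fin (2 * κ + 1 + 1) → Fin (2 * κ + 1 + 1) → ℂ) := by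
    funext i
    refine Fin.cases ?_ (fun i => ?_) i <;> rfl
  rw [h3, nsmul_eq_mul, smul_eq_mul]
  change _ = _ * Matrix.det _
  ring

theorem trAlt_eq (κ : ℕ) (f : Fin (2 * κ + 1 + 1) → ℂ)
    (w : Fin (2 * κ + 1) → (Fin (2 * κ + 1 + 1) → ℂ)) :
    trAlt κ (diracGamma (κ + 1) (2 * κ + 1 + 2) * cliffMap κ f) w =
      ((2 * Complex.I) ^ (κ + 1) * (Nat.factorial (2 * κ + 1) : ℂ)) *
        Matrix.det (Matrix.of (Matrix.vecCons f w)) := by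
  have hlin : trAlt κ (diracGamma (κ + 1) (2 * κ + 1 + 2) * cliffMap κ f) w =
      ∑ j, f j * trAlt κ (diracGamma (κ + 1) (2 * κ + 1 + 2) * cliffMap κ (Pi.single j 1)) w := by
    simp only [trAlt_apply, Finset.mul_sum]
    rw [Finset.sum_comm]
    refine Finset.sum_congr rfl (fun ρ _ => ?_)
    conv_lhs => rw [pi_eq_sum_univ' f, map_sum, Finset.mul_sum, Finset.sum_mul, Matrix.trace_sum,
      Finset.mul_sum]
    refine Finset.sum_congr rfl (fun j _ => ?_)
    rw [map_smul, mul_smul_comm, smul_mul_assoc, Matrix.trace_smul, smul_eq_mul]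
    ring
  rw [hlin]
  have hf : f = ∑ j, f j • (Pi.single j (1:ℂ) : Fin (2 * κ + 1 + 1) → ℂ) := by
    funext i
    simp [Finset.sum_apply, Pi.single_apply]
  have hdet : Matrix.det (Matrix.of (Matrix.vecCons f w)) =
      (Matrix.detRowAlternating (n := Fin (2 * κ + 1 + 1)) (R := ℂ)).curryLeft f w := rfl
  rw [hdet]
  have hs : (Matrix.detRowAlternating (n := Fin (2 * κ + 1 + 1)) (R := ℂ)).curryLeft f w =
      ∑ j, f j * (Matrix.detRowAlternating (n := Fin (2 * κ + 1 + 1)) (R := ℂ)).curryLeft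
        (Pi.single j 1) w := by
    let E : ((Fin (2 * κ + 1 + 1) → ℂ) [⋀^Fin (2 * κ + 1)]→ₗ[ℂ] ℂ) →ₗ[ℂ] ℂ :=
      { toFun := fun a => a w, map_add' := fun _ _ => rfl, map_smul' := fun _ _ => rfl }
    have h5 := congrArg (fun g => E
      ((Matrix.detRowAlternating (n := Fin (2 * κ + 1 + 1)) (R := ℂ)).curryLeft g)) hf
    simp only [map_sum, map_smul] at h5
    exact h5
  rw [hs, Finset.mul_sum]
  refine Finset.sum_congr rfl (fun j _ => ?_)
  rw [trAlt_single, AlternatingMap.smul_apply, smul_eq_mul]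
  ring

end helpers


/-- Odd-dimensional geometric identity for the flattened chiral Hamiltonian
`F(k) = H(k)/|h(k)|` with `H(k) = h(k)·Γ` and chiral matrix `γ₀ = γ_d^{d+2}`:
`Σ_ρ sgn(ρ) tr(γ₀ F ∂_{ρ(1)}F ⋯ ∂_{ρ(d)}F) = (2i)^{(d+1)/2} d! det(L)/|h|^{d+1}`,
where `d = 2κ+1` and `L` has first row `h(k)` and remaining rows `∂h/∂k_j(k)`. -/
theorem flattened_trace_degree_odd (κ : ℕ) (hκ : 1 ≤ κ)
    (h : EuclideanSpace ℝ (Fin (2 * κ + 1)) → EuclideanSpace ℝ (Fin (2 * κ + 1 + 1)))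
    (k : EuclideanSpace ℝ (Fin (2 * κ + 1)))
    (hne : ∀ x, h x ≠ 0)
    (hdiff : DifferentiableAt ℝ h k) :
    let γ₀ : Matrix (Fin (2 ^ (κ + 1))) (Fin (2 ^ (κ + 1))) ℂ :=
      diracGamma (κ + 1) ((2 * κ + 1) + 2)
    let F : EuclideanSpace ℝ (Fin (2 * κ + 1)) →
        Matrix (Fin (2 ^ (κ + 1))) (Fin (2 ^ (κ + 1))) ℂ :=
      fun k' => ∑ j : Fin (2 * κ + 1 + 1),
        ((h k' j / ‖h k'‖ : ℝ) : ℂ) • diracGamma (κ + 1) ((j : ℕ) + 1)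
    let pdF : Fin (2 * κ + 1) → Matrix (Fin (2 ^ (κ + 1))) (Fin (2 ^ (κ + 1))) ℂ :=
      fun j => fderiv ℝ F k (EuclideanSpace.single j 1)
    let L : Matrix (Fin (2 * κ + 1 + 1)) (Fin (2 * κ + 1 + 1)) ℝ :=
      Matrix.of (Fin.cons (fun l => h k l)
        (fun (j : Fin (2 * κ + 1)) (l : Fin (2 * κ + 1 + 1)) =>
          fderiv ℝ h k (EuclideanSpace.single j 1) l))
    ∑ ρ : Equiv.Perm (Fin (2 * κ + 1)), ((Equiv.Perm.sign ρ : ℤ) : ℂ) *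
        Matrix.trace (γ₀ * (F k * (List.ofFn fun i : Fin (2 * κ + 1) => pdF (ρ i)).prod))
      = (2 * Complex.I) ^ (κ + 1) * (Nat.factorial (2 * κ + 1) : ℂ) *
          ((L.det : ℝ) : ℂ) / ((‖h k‖ : ℝ) : ℂ) ^ (2 * κ + 1 + 1) := by
  intro γ₀ F pdF L
  have hn : ‖h k‖ ≠ 0 := norm_ne_zero_iff.2 (hne k)
  have hN : DifferentiableAt ℝ (fun x => ‖h x‖⁻¹) k :=
    (hdiff.norm ℝ (hne k)).inv hn
  have hc : ∀ j : Fin (2 * κ + 1 + 1), HasFDerivAt (fun x => h x j)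
      ((EuclideanSpace.proj j : EuclideanSpace ℝ (Fin (2 * κ + 1 + 1)) →L[ℝ] ℝ).comp
        (fderiv ℝ h k)) k := fun j =>
    (EuclideanSpace.proj j : EuclideanSpace ℝ (Fin (2 * κ + 1 + 1)) →L[ℝ] ℝ).hasFDerivAt.comp k
      hdiff.hasFDerivAt
  have hF : HasFDerivAt F (∑ j : Fin (2 * κ + 1 + 1),
      (h k j • fderiv ℝ (fun x => ‖h x‖⁻¹) k + ‖h k‖⁻¹ •
        ((EuclideanSpace.proj j : EuclideanSpace ℝ (Fin (2 * κ + 1 + 1)) →L[ℝ] ℝ).comp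
          (fderiv ℝ h k))).smulRight (diracGamma (κ + 1) ((j : ℕ) + 1))) k := by
    have h1 : F = fun x => ∑ j : Fin (2 * κ + 1 + 1),
        (h x j * ‖h x‖⁻¹) • diracGamma (κ + 1) ((j : ℕ) + 1) := by
      funext x
      refine Finset.sum_congr rfl (fun j _ => ?_)
      rw [div_eq_mul_inv]
      ext a b
      simp
    rw [h1]
    refine HasFDerivAt.fun_sum (fun j _ => ?_)
    exact ((hc j).mul hN.hasFDerivAt).smul_const _
  let a : Fin (2 * κ + 1) → ℝ := fun i =>
    fderiv ℝ (fun x => ‖h x‖⁻¹) k (EuclideanSpace.single i 1)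
  let w : Fin (2 * κ + 1) → Fin (2 * κ + 1 + 1) → ℝ := fun i l =>
    h k l * a i + ‖h k‖⁻¹ * fderiv ℝ h k (EuclideanSpace.single i 1) l
  have hpd : ∀ i, pdF i = cliffMap κ (fun l => ((w i l : ℝ) : ℂ)) := by
    intro i
    change fderiv ℝ F k (EuclideanSpace.single i 1) = _
    rw [hF.fderiv]
    simp only [cliffMap, Fintype.linearCombination_apply]
    rw [ContinuousLinearMap.sum_apply]
    refine Finset.sum_congr rfl (fun j _ => ?_)
    ext p q
    simp [w, a]
  have hFk : F k = cliffMap κ (fun l => ((h k l / ‖h k‖ : ℝ) : ℂ)) := by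
    simp only [cliffMap, Fintype.linearCombination_apply]
    rfl
  simp only [hpd, hFk]
  have hmain := trAlt_eq κ (fun l => ((h k l / ‖h k‖ : ℝ) : ℂ)) (fun i l => ((w i l : ℝ) : ℂ))
  rw [trAlt_apply] at hmain
  simp only [mul_assoc (diracGamma (κ + 1) (2 * κ + 1 + 2))] at hmain
  refine hmain.trans ?_
  have hd : Matrix.det (Matrix.of (Matrix.vecCons (fun l => h k l / ‖h k‖) w)) =
      Matrix.det (‖h k‖⁻¹ • L) := by
    refine Matrix.det_eq_of_forall_row_eq_smul_add_const
      (Fin.cons 0 (fun i => a i * ‖h k‖)) 0 rfl (fun i j => ?_)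
    refine Fin.cases ?_ (fun i => ?_) i
    · simp [L, div_eq_mul_inv, mul_comm]
    · simp [L, w]
      field_simp
      ring
  have hdc : Matrix.det (Matrix.of (Matrix.vecCons (fun l => ((h k l / ‖h k‖ : ℝ) : ℂ))
      (fun i l => ((w i l : ℝ) : ℂ)))) =
      ((Matrix.det (Matrix.of (Matrix.vecCons (fun l => h k l / ‖h k‖) w)) : ℝ) : ℂ) := by
    change _ = Complex.ofRealHom _
    rw [RingHom.map_det]
    congr 1
    ext i j
    refine Fin.cases ?_ (fun i => ?_) i <;> simp
  rw [hdc, hd, Matrix.det_smul, Fintype.card_fin]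
  push_cast
  rw [inv_pow]
  ring
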